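/- Suppose that for the single-input affine system ẋ = f(x)+u g(x) there exists a smooth, positive definite and proper function V:ℝⁿ→ℝ⁺ such that for every x≠0 one of the following holds: (i) (gV)(x)≠0; (ii) (gV)(x)=0 and (fV)(x)<0; or (iii) there exists an integer N=N(x)≥1 such that (gV)(x)=0, (fⁱV)(x)=0 for i=1,…,N, and (Δ₁Δ₂⋯Δ_kV)(x)=0 for all Δ₁,…,Δ_k ∈ Lie{f,g}∖{g} with Σ_{p=1}^{k} order_{{f,g}}Δ_p ≤ N, together with one of the properties (P1) (f^{N+1}V)(x)<0; (P2) N odd and ([[…[[f,g],g],…,g],g]V)(x)≠0 (N iterated brackets with g); (P3) N even and ([[…[[f,g],g],…,g],g]V)(x)<0 (N iterated brackets with g); (P4) (f^{N+1}V)(x)=0 and ([[…[[g,f],f],…,f],f]V)(x)≠0 (N iterated brackets with f). Then the system satisfies Assumption 1 with the same V and with a(s):=2s: for every ξ>0 and every x₀≠0 there exist ε=ε(x₀)∈(0,ξ] and a measurable locally essentially bounded control u(·,x₀):[0,ε]→ℝ such that V(x(ε,0,x₀,u(·,x₀)))<V(x₀) and V(x(s,0,x₀,u(·,x₀)))≤2V(x₀)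 for all s∈[0,ε]. -/

import Mathlib

open MeasureTheory Filter Set

noncomputable section

/-- `Euc n` is the Euclidean state space `ℝⁿ`. -/
abbrev Euc (n : ℕ) : Type := EuclideanSpace ℝ (Fin n)

/-- A control is admissible if it is measurable and locally essentially bounded. -/
def AdmissibleControl {U : Type*} [NormedAddCommGroup U] [MeasurableSpace U]
    (u : ℝ → U) : Prop :=
  Measurable u ∧ ∀ T : ℝ, ∃ C : ℝ, ∀ᵐ t ∂(volume.restrict (Icc (-T) T)), ‖u t‖ ≤ C

/-- `x` is a (Carathéodory) solution of `ẋ = f(x, u(t))` with `x s = x₀`, on `[s, b]`. -/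
def IsSolOn {n : ℕ} {U : Type*} (f : Euc n → U → Euc n) (u : ℝ → U) (s : ℝ)
    (x₀ : Euc n) (x : ℝ → Euc n) (b : ℝ) : Prop :=
  ∀ t ∈ Icc s b, x t = x₀ + ∫ τ in s..t, f (x τ) (u τ)

/-- `x` is a (Carathéodory) solution of `ẋ = f(x, u(t))` with `x s = x₀`, on `[s, ∞)`. -/
def IsSolGlobal {n : ℕ} {U : Type*} (f : Euc n → U → Euc n) (u : ℝ → U) (s : ℝ)
    (x₀ : Euc n) (x : ℝ → Euc n) : Prop :=
  ∀ t, s ≤ t → x t = x₀ + ∫ τ in s..t, f (x τ) (u τ)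

/-- Vector fields on `ℝⁿ`. -/
abbrev VF (n : ℕ) : Type := Euc n → Euc n

/-- `(XV)(x) := DV(x)·X(x)`, the derivative of `V` along the vector field `X`. -/
def vfD {n : ℕ} (X : VF n) (V : Euc n → ℝ) : Euc n → ℝ := fun x => fderiv ℝ V x (X x)

/-- Lie bracket `[X,Y] := (DY)X − (DX)Y`. -/
def lieB {n : ℕ} (X Y : VF n) : VF n := fun x => fderiv ℝ Y x (X x) - fderiv ℝ X x (Y x)

/-- `iterD X V i = XⁱV`, with `X⁰V = V` and `X^{i+1}V = X(XⁱV)`. -/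
def iterD {n : ℕ} (X : VF n) (V : Euc n → ℝ) : ℕ → (Euc n → ℝ)
  | 0 => V
  | i + 1 => vfD X (iterD X V i)

/-- `applyVFs [Δ₁, …, Δ_k] V = Δ₁Δ₂⋯Δ_kV`. -/
def applyVFs {n : ℕ} : List (VF n) → (Euc n → ℝ) → (Euc n → ℝ)
  | [], V => V
  | X :: L, V => vfD X (applyVFs L V)

/-- `adIter X Y N = [[…[[X,Y],Y],…,Y],Y]` (`N` iterated brackets with `Y`). -/
def adIter {n : ℕ} (X Y : VF n) : ℕ → VF n
  | 0 => X
  | k + 1 => lieB (adIter X Y k) Y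

/-- `Lk f g i` is the subspace `L_{i+1}` of the paper:
`L₁ = span{f,g}` and `L_{i+1} = span{[X,Y] : X ∈ L_i, Y ∈ L₁}`. -/
def Lk {n : ℕ} (f g : VF n) : ℕ → Submodule ℝ (VF n)
  | 0 => Submodule.span ℝ {f, g}
  | i + 1 => Submodule.span ℝ
      {Z : VF n | ∃ X ∈ Lk f g i, ∃ Y ∈ Submodule.span ℝ ({f, g} : Set (VF n)), Z = lieB X Y}

/-- The Lie algebra generated by `{f, g}` (the span of all the `L_i`). -/
def LieGen {n : ℕ} (f g : VF n) : Submodule ℝ (VF n) := ⨆ i : ℕ, Lk f g i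

/-- `hasOrder f g Δ k` : `Δ` has order `k` with respect to `{f,g}`:
order `1` iff `Δ ∈ L₁ \ {0}`; order `k > 1` iff `Δ = Δ₁ + Δ₂` with
`Δ₁ ∈ L_k \ {0}` and `Δ₂ ∈ span{∪_{i=1}^{k-1} L_i}`. -/
def hasOrder {n : ℕ} (f g : VF n) (Δ : VF n) : ℕ → Prop
  | 0 => False
  | 1 => Δ ∈ Lk f g 0 ∧ Δ ≠ 0
  | k + 2 => ∃ Δ₁ Δ₂ : VF n, Δ₁ ∈ Lk f g (k + 1) ∧ Δ₁ ≠ 0 ∧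
      Δ₂ ∈ (⨆ i ∈ Finset.range (k + 1), Lk f g i) ∧ Δ = Δ₁ + Δ₂

/-- `(Δ₁Δ₂⋯Δ_kV)(x) = 0` for all `Δ₁,…,Δ_k ∈ Lie{f,g} ∖ {g}` with
`Σ_p order_{{f,g}} Δ_p ≤ N`. -/
def LieCondZero {n : ℕ} (f g : VF n) (V : Euc n → ℝ) (x : Euc n) (N : ℕ) : Prop :=
  ∀ (Δs : List (VF n)) (os : List ℕ), Δs ≠ [] → Δs.length = os.length →
    (∀ p ∈ List.zip Δs os, p.1 ∈ LieGen f g ∧ p.1 ≠ g ∧ hasOrder f g p.1 p.2) →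
    os.sum ≤ N → applyVFs Δs V x = 0

section abstractPart

variable {S : Type*} [AddCommGroup S] [Module ℝ S]

/-- Limit functional of the time-scaled expansion. -/
def GG (ev : S →ₗ[ℝ] ℝ) (X Y : Module.End ℝ S) (a b : ℝ → ℝ) : ℕ → S → ℝ → ℝ
  | 0, h, _ => ev h
  | m + 1, h, σ => ∫ s in (0:ℝ)..σ,
      (a s * GG ev X Y a b m (X h) s + b s * GG ev X Y a b m (Y h) s)

lemma GG_cont (ev : S →ₗ[ℝ] ℝ) (X Y : Module.End ℝ S) (a b : ℝ → ℝ)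
    (ha : Continuous a) (hb : Continuous b) (m : ℕ) :
    ∀ h, Continuous (GG ev X Y a b m h) := by
  induction m with
  | zero => intro h; exact continuous_const
  | succ m ih =>
    intro h
    have h1 := ih (X h)
    have h2 := ih (Y h)
    have : Continuous (fun s => a s * GG ev X Y a b m (X h) s + b s * GG ev X Y a b m (Y h) s) := by
      fun_prop
    exact intervalIntegral.continuous_primitive (fun _ _ => this.intervalIntegrable _ _) 0

lemma GG_swap (ev : S →ₗ[ℝ] ℝ) (X Y : Module.End ℝ S) (a b : ℝ → ℝ) (m : ℕ) :
    ∀ h, GG ev X Y a b m h = GG ev Y X b a m h := by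
  induction m with
  | zero => intro h; rfl
  | succ m ih =>
    intro h
    funext σ
    simp only [GG]
    congr 1
    funext s
    rw [ih, ih, add_comm]

/-- Words with no `X`. -/
def Q0 (ev : S →ₗ[ℝ] ℝ) (Y : Module.End ℝ S) (B : ℝ → ℝ) (m : ℕ) (h : S) (σ : ℝ) : ℝ :=
  B σ ^ m / (m.factorial : ℝ) * ev ((Y ^ m) h)

/-- The commutator with `Y`. -/
def adE (Y : Module.End ℝ S) : Module.End ℝ (Module.End ℝ S) :=
  LinearMap.mulLeft ℝ Y - LinearMap.mulRight ℝ Y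

/-- Words with exactly one `X`. -/
def Q1 (ev : S →ₗ[ℝ] ℝ) (X Y : Module.End ℝ S) (α B : ℝ → ℝ) : ℕ → S → ℝ → ℝ
  | 0, _, _ => 0
  | m + 1, h, σ => ∑ p ∈ Finset.HasAntidiagonal.antidiagonal m,
      (∫ s in (0:ℝ)..σ, α s * (B s ^ p.1 / (p.1.factorial : ℝ))) *
        (B σ ^ p.2 / (p.2.factorial : ℝ)) * ev (((adE Y ^ p.1) X) ((Y ^ p.2) h))

lemma pow_mul_eq (X Y : Module.End ℝ S) (m : ℕ) :
    Y ^ m * X = ∑ p ∈ Finset.HasAntidiagonal.antidiagonal m,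
      (m.choose p.1) • ((adE Y ^ p.1) X * Y ^ p.2) := by
  have hc : Commute (adE Y) (LinearMap.mulRight ℝ Y) := by
    unfold adE
    exact (LinearMap.commute_mulLeft_right Y Y).sub_left (Commute.refl _)
  have h1 : LinearMap.mulLeft ℝ Y = adE Y + LinearMap.mulRight ℝ Y := by
    unfold adE; abel
  have h2 : (LinearMap.mulLeft ℝ Y ^ m) X = Y ^ m * X := by
    rw [LinearMap.pow_mulLeft]; rfl
  rw [← h2, h1, hc.add_pow']
  rw [LinearMap.sum_apply]
  refine Finset.sum_congr rfl fun p hp => ?_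
  rw [LinearMap.smul_apply, (hc.pow_pow _ _).eq, Module.End.mul_apply, LinearMap.pow_mulRight]
  rfl

lemma Q0_succ (ev : S →ₗ[ℝ] ℝ) (Y : Module.End ℝ S) (β B : ℝ → ℝ) (hβ : Continuous β)
    (hB : ∀ s, HasDerivAt B (β s) s) (hB0 : B 0 = 0) (m : ℕ) (h : S) (σ : ℝ) :
    Q0 ev Y B (m + 1) h σ = ∫ s in (0:ℝ)..σ, β s * Q0 ev Y B m (Y h) s := by
  have hBc : Continuous B := continuous_iff_continuousAt.2 fun s => (hB s).continuousAt
  rw [intervalIntegral.integral_eq_sub_of_hasDerivAt (f := Q0 ev Y B (m + 1) h)]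
  · simp [Q0, hB0]
  · intro s _
    have := (((hB s).pow (m + 1)).div_const ((m + 1).factorial : ℝ)).mul_const (ev ((Y ^ (m+1)) h))
    refine this.congr_deriv ?_
    have hm : (m.factorial : ℝ) ≠ 0 := by positivity
    simp only [Q0, Nat.factorial_succ, pow_succ Y, Module.End.mul_apply]
    push_cast
    field_simp
  · apply Continuous.intervalIntegrable
    unfold Q0
    fun_prop

lemma ev_pow_mul (ev : S →ₗ[ℝ] ℝ) (X Y : Module.End ℝ S) (m : ℕ) (h : S) (b : ℝ) :
    ∑ p ∈ Finset.HasAntidiagonal.antidiagonal m, (b ^ p.1 / (p.1.factorial : ℝ)) *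
        (b ^ p.2 / (p.2.factorial : ℝ)) * ev (((adE Y ^ p.1) X) ((Y ^ p.2) h))
      = b ^ m / (m.factorial : ℝ) * ev ((Y ^ m) (X h)) := by
  have : (Y ^ m) (X h) = (Y ^ m * X) h := rfl
  rw [this, pow_mul_eq, LinearMap.sum_apply, map_sum, Finset.mul_sum]
  refine Finset.sum_congr rfl fun p hp => ?_
  rw [Finset.HasAntidiagonal.mem_antidiagonal] at hp
  subst hp
  rw [LinearMap.smul_apply, map_nsmul, Module.End.mul_apply, nsmul_eq_mul, Nat.choose_symm_add, Nat.add_choose,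
    Nat.cast_div (Nat.factorial_mul_factorial_dvd_factorial_add _ _) (by positivity)]
  push_cast
  have h1 : (p.1.factorial : ℝ) ≠ 0 := by positivity
  have h2 : (p.2.factorial : ℝ) ≠ 0 := by positivity
  have h3 : ((p.1 + p.2).factorial : ℝ) ≠ 0 := by positivity
  field_simp
  ring

lemma Q1_cont (ev : S →ₗ[ℝ] ℝ) (X Y : Module.End ℝ S) (α B : ℝ → ℝ) (hα : Continuous α)
    (hB : Continuous B) (m : ℕ) (h : S) : Continuous (Q1 ev X Y α B m h) := by
  cases m with
  | zero => exact continuous_const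
  | succ m =>
    unfold Q1
    refine continuous_finsetSum _ fun p _ => ?_
    have : Continuous fun s => α s * (B s ^ p.1 / (p.1.factorial : ℝ)) := by fun_prop
    have := intervalIntegral.continuous_primitive (μ := volume)
      (fun a b => this.intervalIntegrable a b) 0
    fun_prop

lemma Q0_cont (ev : S →ₗ[ℝ] ℝ) (Y : Module.End ℝ S) (B : ℝ → ℝ)
    (hB : Continuous B) (m : ℕ) (h : S) : Continuous (Q0 ev Y B m h) := by
  unfold Q0
  fun_prop

lemma Q1_succ (ev : S →ₗ[ℝ] ℝ) (X Y : Module.End ℝ S) (α β B : ℝ → ℝ) (hα : Continuous α)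
    (hβ : Continuous β)
    (hB : ∀ s, HasDerivAt B (β s) s) (m : ℕ) (h : S) (σ : ℝ) :
    Q1 ev X Y α B (m + 1) h σ = ∫ s in (0:ℝ)..σ,
      (α s * Q0 ev Y B m (X h) s + β s * Q1 ev X Y α B m (Y h) s) := by
  have hBc : Continuous B := continuous_iff_continuousAt.2 fun s => (hB s).continuousAt
  rw [intervalIntegral.integral_eq_sub_of_hasDerivAt (f := Q1 ev X Y α B (m + 1) h)]
  · simp [Q1]
  · intro s _
    have key : ∀ p ∈ Finset.HasAntidiagonal.antidiagonal m, HasDerivAt (fun σ =>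
      (∫ s in (0:ℝ)..σ, α s * (B s ^ p.1 / (p.1.factorial : ℝ))) *
        (B σ ^ p.2 / (p.2.factorial : ℝ)) * ev (((adE Y ^ p.1) X) ((Y ^ p.2) h)))
        (((α s * (B s ^ p.1 / (p.1.factorial : ℝ))) * (B s ^ p.2 / (p.2.factorial : ℝ)) +
          (∫ s in (0:ℝ)..s, α s * (B s ^ p.1 / (p.1.factorial : ℝ))) *
            ((p.2 : ℝ) * B s ^ (p.2 - 1) * β s / (p.2.factorial : ℝ))) *
            ev (((adE Y ^ p.1) X) ((Y ^ p.2) h))) s := by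
      intro p _
      have hc : Continuous fun s => α s * (B s ^ p.1 / (p.1.factorial : ℝ)) := by fun_prop
      have h1 := hc.integral_hasStrictDerivAt 0 s |>.hasDerivAt
      have h2 := ((hB s).pow p.2).div_const (p.2.factorial : ℝ)
      exact (h1.mul h2).mul_const _
    have := HasDerivAt.fun_sum key
    refine HasDerivAt.congr_deriv (f := Q1 ev X Y α B (m + 1) h) this ?_
    simp only [add_mul, Finset.sum_add_distrib]
    congr 1
    · unfold Q0
      rw [← ev_pow_mul, Finset.mul_sum]
      refine Finset.sum_congr rfl fun p _ => ?_
      ring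
    · cases m with
      | zero => simp [Q1]
      | succ m =>
        rw [Finset.Nat.sum_antidiagonal_succ']
        simp only [Q1, Finset.mul_sum]
        simp only [Nat.cast_zero, zero_mul, zero_div, mul_zero, zero_add]
        refine Finset.sum_congr rfl fun p _ => ?_
        have hm : (p.2.factorial : ℝ) ≠ 0 := by positivity
        simp only [Nat.factorial_succ, pow_succ Y, Module.End.mul_apply]
        push_cast
        field_simp
  · apply Continuous.intervalIntegrable
    have := Q1_cont ev X Y α B hα hBc m (Y h)
    have := Q0_cont ev Y B hBc m (X h)
    fun_prop

lemma abs_integral_le' (F : ℝ → ℝ) (C σ : ℝ) (hσ : σ ∈ Icc (0:ℝ) 1)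
    (hF : ∀ s ∈ Icc (0:ℝ) 1, |F s| ≤ C) : |∫ s in (0:ℝ)..σ, F s| ≤ C := by
  have hC : 0 ≤ C := (abs_nonneg _).trans (hF 0 (by simp))
  have := intervalIntegral.norm_integral_le_of_norm_le_const (a := (0:ℝ)) (b := σ) (f := F) (C := C)
    (fun s hs => by
      rw [uIoc_of_le hσ.1] at hs
      exact hF s ⟨hs.1.le, hs.2.trans hσ.2⟩)
  rw [Real.norm_eq_abs, sub_zero, abs_of_nonneg hσ.1] at this
  nlinarith [hσ.2, hσ.1]

lemma bdd01 (F : ℝ → ℝ) (hF : Continuous F) : ∃ C, 0 < C ∧ ∀ s ∈ Icc (0:ℝ) 1, |F s| ≤ C := by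
  obtain ⟨C, hC⟩ := isCompact_Icc.exists_bound_of_continuousOn (s := Icc (0:ℝ) 1) hF.continuousOn
  exact ⟨max C 1, by positivity, fun s hs => (hC s hs).trans (le_max_left _ _)⟩

lemma GG_expand0 (ev : S →ₗ[ℝ] ℝ) (X Y : Module.End ℝ S) (α β B : ℝ → ℝ) (hα : Continuous α)
    (hβ : Continuous β) (hB : ∀ s, HasDerivAt B (β s) s) (hB0 : B 0 = 0) (m : ℕ) :
    ∀ h : S, ∃ C, 0 ≤ C ∧ ∀ l : ℝ, |l| ≤ 1 → ∀ σ ∈ Icc (0:ℝ) 1,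
      |GG ev X Y (fun s => l * α s) β m h σ - Q0 ev Y B m h σ| ≤ C * |l| := by
  have hBc : Continuous B := continuous_iff_continuousAt.2 fun s => (hB s).continuousAt
  induction m with
  | zero => intro h; exact ⟨0, le_rfl, fun l hl σ hσ => by simp [GG, Q0]⟩
  | succ m ih =>
    intro h
    obtain ⟨C1, hC1, H1⟩ := ih (Y h)
    obtain ⟨C2, hC2, H2⟩ := ih (X h)
    obtain ⟨A, hA, HA⟩ := bdd01 α hα
    obtain ⟨B', hB', HB⟩ := bdd01 β hβ
    obtain ⟨D, hD, HD⟩ := bdd01 _ (Q0_cont ev Y B hBc m (X h))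
    refine ⟨A * (C2 + D) + B' * C1, by positivity, fun l hl σ hσ => ?_⟩
    have c1 := GG_cont ev X Y (fun s => l * α s) β (by fun_prop) hβ m (X h)
    have c2 := GG_cont ev X Y (fun s => l * α s) β (by fun_prop) hβ m (Y h)
    have c3 := Q0_cont ev Y B hBc m (Y h)
    rw [Q0_succ ev Y β B hβ hB hB0]
    simp only [GG]
    rw [← intervalIntegral.integral_sub
      (Continuous.intervalIntegrable (by fun_prop) _ _)
      (Continuous.intervalIntegrable (by fun_prop) _ _)]
    apply abs_integral_le' _ _ _ hσ
    intro s hs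
    have e1 := H1 l hl s hs
    have e2 := H2 l hl s hs
    have e3 := HA s hs
    have e4 := HB s hs
    have e5 := HD s hs
    have : |GG ev X Y (fun s => l * α s) β m (X h) s| ≤ C2 + D := by
      have := abs_add_le (GG ev X Y (fun s => l * α s) β m (X h) s - Q0 ev Y B m (X h) s)
        (Q0 ev Y B m (X h) s)
      rw [sub_add_cancel] at this
      have : C2 * |l| ≤ C2 * 1 := by gcongr
      linarith
    calc _ = |l * α s * GG ev X Y (fun s => l * α s) β m (X h) s +
          β s * (GG ev X Y (fun s => l * α s) β m (Y h) s - Q0 ev Y B m (Y h) s)| := by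
          congr 1; ring
      _ ≤ |l| * |α s| * |GG ev X Y (fun s => l * α s) β m (X h) s| +
          |β s| * |GG ev X Y (fun s => l * α s) β m (Y h) s - Q0 ev Y B m (Y h) s| := by
          refine (abs_add_le _ _).trans ?_
          rw [abs_mul, abs_mul, abs_mul]
      _ ≤ |l| * A * (C2 + D) + B' * (C1 * |l|) := by gcongr
      _ = _ := by ring

lemma GG_expand1 (ev : S →ₗ[ℝ] ℝ) (X Y : Module.End ℝ S) (α β B : ℝ → ℝ) (hα : Continuous α)
    (hβ : Continuous β) (hB : ∀ s, HasDerivAt B (β s) s) (hB0 : B 0 = 0) (m : ℕ) :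
    ∀ h : S, ∃ C, 0 ≤ C ∧ ∀ l : ℝ, |l| ≤ 1 → ∀ σ ∈ Icc (0:ℝ) 1,
      |GG ev X Y (fun s => l * α s) β m h σ - (Q0 ev Y B m h σ + l * Q1 ev X Y α B m h σ)|
        ≤ C * |l| ^ 2 := by
  have hBc : Continuous B := continuous_iff_continuousAt.2 fun s => (hB s).continuousAt
  induction m with
  | zero => intro h; exact ⟨0, le_rfl, fun l hl σ hσ => by simp [GG, Q0, Q1]⟩
  | succ m ih =>
    intro h
    obtain ⟨C1, hC1, H1⟩ := ih (Y h)
    obtain ⟨C2, hC2, H2⟩ := GG_expand0 ev X Y α β B hα hβ hB hB0 m (X h)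
    obtain ⟨A, hA, HA⟩ := bdd01 α hα
    obtain ⟨B', hB', HB⟩ := bdd01 β hβ
    refine ⟨A * C2 + B' * C1, by positivity, fun l hl σ hσ => ?_⟩
    have c1 := GG_cont ev X Y (fun s => l * α s) β (by fun_prop) hβ m (X h)
    have c2 := GG_cont ev X Y (fun s => l * α s) β (by fun_prop) hβ m (Y h)
    have c3 := Q0_cont ev Y B hBc m (Y h)
    have c4 := Q0_cont ev Y B hBc m (X h)
    have c5 := Q1_cont ev X Y α B hα hBc m (Y h)
    rw [Q0_succ ev Y β B hβ hB hB0, Q1_succ ev X Y α β B hα hβ hB]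
    simp only [GG]
    rw [← intervalIntegral.integral_const_mul, ← intervalIntegral.integral_add
      (Continuous.intervalIntegrable (by fun_prop) _ _)
      (Continuous.intervalIntegrable (by fun_prop) _ _), ← intervalIntegral.integral_sub
      (Continuous.intervalIntegrable (by fun_prop) _ _)
      (Continuous.intervalIntegrable (by fun_prop) _ _)]
    apply abs_integral_le' _ _ _ hσ
    intro s hs
    have e1 := H1 l hl s hs
    have e2 := H2 l hl s hs
    have e3 := HA s hs
    have e4 := HB s hs
    calc _ = |l * α s * (GG ev X Y (fun s => l * α s) β m (X h) s - Q0 ev Y B m (X h) s) +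
          β s * (GG ev X Y (fun s => l * α s) β m (Y h) s -
            (Q0 ev Y B m (Y h) s + l * Q1 ev X Y α B m (Y h) s))| := by
          congr 1; ring
      _ ≤ |l| * |α s| * |GG ev X Y (fun s => l * α s) β m (X h) s - Q0 ev Y B m (X h) s| +
          |β s| * |GG ev X Y (fun s => l * α s) β m (Y h) s -
            (Q0 ev Y B m (Y h) s + l * Q1 ev X Y α B m (Y h) s)| := by
          refine (abs_add_le _ _).trans ?_
          rw [abs_mul, abs_mul, abs_mul]
      _ ≤ |l| * A * (C2 * |l|) + B' * (C1 * |l| ^ 2) := by gcongr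
      _ = _ := by ring

/-- If the zeroth order term is negative, so is `GG` for small positive `l`. -/
lemma GG_neg0 (ev : S →ₗ[ℝ] ℝ) (X Y : Module.End ℝ S) (α β B : ℝ → ℝ) (hα : Continuous α)
    (hβ : Continuous β) (hB : ∀ s, HasDerivAt B (β s) s) (hB0 : B 0 = 0) (m : ℕ) (h : S)
    (hneg : Q0 ev Y B m h 1 < 0) :
    ∃ l : ℝ, 0 < l ∧ GG ev X Y (fun s => l * α s) β m h 1 < 0 := by
  obtain ⟨C, hC, H⟩ := GG_expand0 ev X Y α β B hα hβ hB hB0 m h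
  set q := Q0 ev Y B m h 1
  refine ⟨min 1 (-q / (2 * (C + 1))), ?_, ?_⟩
  · apply lt_min one_pos
    apply div_pos <;> linarith
  · set l := min 1 (-q / (2 * (C + 1)))
    have hl0 : 0 < l := by
      apply lt_min one_pos
      apply div_pos <;> linarith
    have hl1 : l ≤ 1 := min_le_left _ _
    have hl2 : l ≤ -q / (2 * (C + 1)) := min_le_right _ _
    have := H l (by rw [abs_of_pos hl0]; exact hl1) 1 (by simp)
    rw [abs_of_pos hl0] at this
    rw [le_div_iff₀ (by linarith)] at hl2
    have := le_abs_self (GG ev X Y (fun s => l * α s) β m h 1 - q)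
    nlinarith

/-- If the zeroth order term vanishes and the first order term does not,
`GG` is negative for small `l` of the right sign. -/
lemma GG_neg1 (ev : S →ₗ[ℝ] ℝ) (X Y : Module.End ℝ S) (α β B : ℝ → ℝ) (hα : Continuous α)
    (hβ : Continuous β) (hB : ∀ s, HasDerivAt B (β s) s) (hB0 : B 0 = 0) (m : ℕ) (h : S)
    (hz : Q0 ev Y B m h 1 = 0) (e : ℝ) (he : |e| = 1) (hneg : e * Q1 ev X Y α B m h 1 < 0) :
    ∃ l : ℝ, 0 < l ∧ GG ev X Y (fun s => (e * l) * α s) β m h 1 < 0 := by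
  obtain ⟨C, hC, H⟩ := GG_expand1 ev X Y α β B hα hβ hB hB0 m h
  set q := Q1 ev X Y α B m h 1
  have hl0 : 0 < min 1 (-(e * q) / (2 * (C + 1))) := by
    apply lt_min one_pos
    apply div_pos <;> linarith
  refine ⟨min 1 (-(e * q) / (2 * (C + 1))), hl0, ?_⟩
  set l := min 1 (-(e * q) / (2 * (C + 1)))
  have hl1 : l ≤ 1 := min_le_left _ _
  have hl2 : l ≤ -(e * q) / (2 * (C + 1)) := min_le_right _ _
  have habs : |e * l| = l := by rw [abs_mul, he, one_mul, abs_of_pos hl0]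
  have := H (e * l) (by rw [habs]; exact hl1) 1 (by simp)
  rw [habs, hz, zero_add] at this
  rw [le_div_iff₀ (by linarith)] at hl2
  have := le_abs_self (GG ev X Y (fun s => (e * l) * α s) β m h 1 - e * l * q)
  have h3 : C * l ^ 2 + e * l * q = l * (C * l + e * q) := by ring
  have h4 : l * (C * l + e * q) < 0 := mul_neg_of_pos_of_neg hl0 (by nlinarith)
  linarith

end abstractPart
section smoothPart

/-- Smooth functions. -/
def Sm (n : ℕ) : Submodule ℝ (Euc n → ℝ) where
  carrier := {h | ContDiff ℝ (⊤ : ℕ∞) h}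
  add_mem' := fun {a b} (ha : ContDiff ℝ (⊤ : ℕ∞) a) (hb : ContDiff ℝ (⊤ : ℕ∞) b) => by
    change ContDiff ℝ (⊤ : ℕ∞) (a + b)
    exact ha.add hb
  zero_mem' := by
    change ContDiff ℝ (⊤ : ℕ∞) (fun _ => (0:ℝ))
    exact contDiff_const
  smul_mem' := fun c a (ha : ContDiff ℝ (⊤ : ℕ∞) a) => by
    change ContDiff ℝ (⊤ : ℕ∞) (c • a)
    exact ha.const_smul c

lemma Sm_cd {n : ℕ} (h : Sm n) : ContDiff ℝ (⊤ : ℕ∞) h.1 := h.2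

lemma vfD_smooth {n : ℕ} {X : VF n} (hX : ContDiff ℝ (⊤ : ℕ∞) X) {h : Euc n → ℝ}
    (hh : ContDiff ℝ (⊤ : ℕ∞) h) : ContDiff ℝ (⊤ : ℕ∞) (vfD X h) :=
  (hh.fderiv_right (m := (⊤ : ℕ∞)) (by simp)).clm_apply hX

lemma lieB_smooth {n : ℕ} {X Y : VF n} (hX : ContDiff ℝ (⊤ : ℕ∞) X)
    (hY : ContDiff ℝ (⊤ : ℕ∞) Y) : ContDiff ℝ (⊤ : ℕ∞) (lieB X Y) :=
  ((hY.fderiv_right (m := (⊤ : ℕ∞)) (by simp)).clm_apply hX).sub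
    ((hX.fderiv_right (m := (⊤ : ℕ∞)) (by simp)).clm_apply hY)

lemma adIter_smooth {n : ℕ} {X Y : VF n} (hX : ContDiff ℝ (⊤ : ℕ∞) X)
    (hY : ContDiff ℝ (⊤ : ℕ∞) Y) (k : ℕ) : ContDiff ℝ (⊤ : ℕ∞) (adIter X Y k) := by
  induction k with
  | zero => exact hX
  | succ k ih => exact lieB_smooth ih hY

lemma smooth_diff {n : ℕ} {F : Type*} [NormedAddCommGroup F] [NormedSpace ℝ F] {h : Euc n → F}
    (hh : ContDiff ℝ (⊤ : ℕ∞) h) : Differentiable ℝ h :=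
  hh.differentiable (by simp)

/-- A smooth vector field as a derivation. -/
def DD {n : ℕ} (X : VF n) (hX : ContDiff ℝ (⊤ : ℕ∞) X) : Module.End ℝ (Sm n) where
  toFun h := ⟨vfD X h.1, vfD_smooth hX h.2⟩
  map_add' a b := by
    ext x
    have ha := smooth_diff a.2 x
    have hb := smooth_diff b.2 x
    simp only [vfD, Submodule.coe_add]
    rw [fderiv_add ha hb]
    rfl
  map_smul' c a := by
    ext x
    have ha := smooth_diff a.2 x
    simp only [vfD, Submodule.coe_smul]
    rw [fderiv_const_smul ha]
    rfl

/-- Evaluation at a point. -/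
def evA {n : ℕ} (x : Euc n) : Sm n →ₗ[ℝ] ℝ where
  toFun h := h.1 x
  map_add' _ _ := rfl
  map_smul' _ _ := rfl

lemma vfD_vfD {n : ℕ} {X Y : VF n} (hY : ContDiff ℝ (⊤ : ℕ∞) Y)
    {h : Euc n → ℝ} (hh : ContDiff ℝ (⊤ : ℕ∞) h) (x : Euc n) :
    vfD X (vfD Y h) x = fderiv ℝ (fderiv ℝ h) x (X x) (Y x)
      + fderiv ℝ h x (fderiv ℝ Y x (X x)) := by
  have h1 : DifferentiableAt ℝ (fderiv ℝ h) x :=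
    smooth_diff (hh.fderiv_right (m := (⊤ : ℕ∞)) (by simp)) x
  have h2 := smooth_diff hY x
  unfold vfD
  rw [fderiv_clm_apply h1 h2]
  simp [add_comm]

lemma DD_lieB {n : ℕ} {X Y : VF n} (hX : ContDiff ℝ (⊤ : ℕ∞) X)
    (hY : ContDiff ℝ (⊤ : ℕ∞) Y) :
    DD (lieB X Y) (lieB_smooth hX hY) = DD X hX * DD Y hY - DD Y hY * DD X hX := by
  ext h x
  have hs : IsSymmSndFDerivAt ℝ h.1 x :=
    ((Sm_cd h).contDiffAt).isSymmSndFDerivAt (by simp; exact WithTop.coe_le_coe.2 (le_top : (2:ℕ∞) ≤ ⊤))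
  change fderiv ℝ h.1 x (lieB X Y x) = vfD X (vfD Y h.1) x - vfD Y (vfD X h.1) x
  rw [vfD_vfD hY h.2, vfD_vfD hX h.2, hs.eq (X x) (Y x)]
  simp [lieB]

lemma DD_adIter {n : ℕ} {X Y : VF n} (hX : ContDiff ℝ (⊤ : ℕ∞) X)
    (hY : ContDiff ℝ (⊤ : ℕ∞) Y) (k : ℕ) :
    DD (adIter X Y k) (adIter_smooth hX hY k) = (-1 : ℝ) ^ k • (adE (DD Y hY) ^ k) (DD X hX) := by
  induction k with
  | zero => simp; rfl
  | succ k ih =>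
    have : DD (adIter X Y (k + 1)) (adIter_smooth hX hY (k + 1))
      = DD (lieB (adIter X Y k) Y) (lieB_smooth (adIter_smooth hX hY k) hY) := rfl
    rw [this, DD_lieB (adIter_smooth hX hY k) hY, ih, pow_succ' (adE _), Module.End.mul_apply]
    generalize (adE (DD Y hY) ^ k) (DD X hX) = Z
    have hZ : adE (DD Y hY) Z = DD Y hY * Z - Z * DD Y hY := rfl
    rw [hZ, smul_mul_assoc, mul_smul_comm, pow_succ]
    module

/-- Words of length less than `m` in `F, G` vanish on `h`. -/
def Van {S : Type*} [AddCommGroup S] [Module ℝ S] (ev : S →ₗ[ℝ] ℝ) (F G : Module.End ℝ S)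
    (m : ℕ) (h : S) : Prop :=
  ∀ l : List (Module.End ℝ S), (∀ X ∈ l, X = F ∨ X = G) → l.length < m → ev (l.prod h) = 0

lemma Van.step {S : Type*} [AddCommGroup S] [Module ℝ S] {ev : S →ₗ[ℝ] ℝ} {F G : Module.End ℝ S}
    {m : ℕ} {h : S} (H : Van ev F G (m + 1) h) (X : Module.End ℝ S) (hX : X = F ∨ X = G) :
    Van ev F G m (X h) := by
  intro l hl hm
  have := H (l ++ [X]) (by
    intro Z hZ
    rcases List.mem_append.1 hZ with h | h
    · exact hl Z h
    · rw [List.mem_singleton] at h; subst h; exact hX) (by simp; omega)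
  simpa using this

/-- `y` solves the rescaled equation. -/
def RSol {n : ℕ} (f g : VF n) (a b : ℝ → ℝ) (x₀ : Euc n) (C ε : ℝ) (y : ℝ → Euc n) : Prop :=
  Continuous y ∧ y 0 = x₀ ∧ (∀ σ ∈ Icc (0:ℝ) 1, HasDerivWithinAt y
    (ε • (a σ • f (y σ) + b σ • g (y σ))) (Icc 0 1) σ) ∧
  ∀ σ ∈ Icc (0:ℝ) 1, ‖y σ - x₀‖ ≤ C * ε

lemma exists_RSol {n : ℕ} (f g : VF n) (hf : ContDiff ℝ (⊤ : ℕ∞) f) (hg : ContDiff ℝ (⊤ : ℕ∞) g)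
    (a b : ℝ → ℝ) (ha : Continuous a) (hb : Continuous b) (x₀ : Euc n) :
    ∃ C : ℝ, 0 < C ∧ ∃ ε₁ : ℝ, 0 < ε₁ ∧ ∀ ε : ℝ, 0 < ε → ε ≤ ε₁ →
      ∃ y, RSol f g a b x₀ C ε y := by
  obtain ⟨A, hA, HA⟩ := bdd01 a ha
  obtain ⟨B, hB, HB⟩ := bdd01 b hb
  have hcpt : IsCompact (Metric.closedBall x₀ 1) := isCompact_closedBall _ _
  obtain ⟨Kf, hKf⟩ := (hf.contDiffOn (s := Metric.closedBall x₀ 1)).exists_lipschitzOnWith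
    (by simp) (convex_closedBall _ _) hcpt
  obtain ⟨Kg, hKg⟩ := (hg.contDiffOn (s := Metric.closedBall x₀ 1)).exists_lipschitzOnWith
    (by simp) (convex_closedBall _ _) hcpt
  obtain ⟨Mf, hMf⟩ := hcpt.exists_bound_of_continuousOn hf.continuous.continuousOn
  obtain ⟨Mg, hMg⟩ := hcpt.exists_bound_of_continuousOn hg.continuous.continuousOn
  have hMf0 : 0 ≤ Mf := (norm_nonneg _).trans (hMf x₀ (by simp))
  have hMg0 : 0 ≤ Mg := (norm_nonneg _).trans (hMg x₀ (by simp))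
  set M := A * Mf + B * Mg + 1 with hM
  have hMpos : 0 < M := by positivity
  refine ⟨M, hMpos, 1 / M, by positivity, fun ε hε hε1 => ?_⟩
  have hεM : M * ε ≤ 1 := by
    rw [le_div_iff₀ hMpos] at hε1; linarith
  set v : ℝ → Euc n → Euc n := fun σ y => ε • (a σ • f y + b σ • g y) with hv
  have hbound : ∀ σ ∈ Icc (0:ℝ) 1, ∀ y ∈ Metric.closedBall x₀ 1, ‖v σ y‖ ≤ M * ε := by
    intro σ hσ y hy
    have h1 := HA σ hσ
    have h2 := HB σ hσ
    have h3 := hMf y hy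
    have h4 := hMg y hy
    simp only [hv, norm_smul, Real.norm_eq_abs, abs_of_pos hε]
    have : ‖a σ • f y + b σ • g y‖ ≤ A * Mf + B * Mg := by
      refine (norm_add_le _ _).trans ?_
      rw [norm_smul, norm_smul, Real.norm_eq_abs, Real.norm_eq_abs]
      gcongr
    nlinarith
  obtain ⟨L, hL⟩ : ∃ L : NNReal, (L : ℝ) = M * ε := ⟨_, Real.coe_toNNReal _ (by positivity)⟩
  obtain ⟨eN, heN⟩ : ∃ L : NNReal, (L : ℝ) = ε := ⟨_, Real.coe_toNNReal _ hε.le⟩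
  obtain ⟨AN, hAN⟩ : ∃ L : NNReal, (L : ℝ) = A := ⟨_, Real.coe_toNNReal _ hA.le⟩
  obtain ⟨BN, hBN⟩ : ∃ L : NNReal, (L : ℝ) = B := ⟨_, Real.coe_toNNReal _ hB.le⟩
  have hP : IsPicardLindelof v (tmin := 0) (tmax := 1) ⟨0, by simp⟩ x₀ 1 0
      L (eN * (AN * Kf + BN * Kg)) := by
    refine ⟨?_, ?_, ?_, ?_⟩
    · intro σ hσ
      apply LipschitzOnWith.of_dist_le_mul
      intro y hy z hz
      have h1 := hKf.dist_le_mul y hy z hz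
      have h2 := hKg.dist_le_mul y hy z hz
      rw [dist_eq_norm] at h1 h2 ⊢
      have e : v σ y - v σ z = ε • (a σ • (f y - f z) + b σ • (g y - g z)) := by
        simp only [hv]; module
      rw [e, norm_smul, Real.norm_eq_abs, abs_of_pos hε]
      have : ‖a σ • (f y - f z) + b σ • (g y - g z)‖ ≤
          A * (Kf * dist y z) + B * (Kg * dist y z) := by
        refine (norm_add_le _ _).trans ?_
        rw [norm_smul, norm_smul, Real.norm_eq_abs, Real.norm_eq_abs]
        have h3 := HA σ hσ
        have h4 := HB σ hσ
        gcongr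
      calc _ ≤ ε * (A * (Kf * dist y z) + B * (Kg * dist y z)) := by gcongr
        _ = _ := by
          push_cast
          rw [heN, hAN, hBN]
          ring
    · intro y _
      apply Continuous.continuousOn
      simp only [hv]
      fun_prop
    · intro σ hσ y hy
      rw [hL]
      exact hbound σ hσ y (by simpa using hy)
    · rw [hL]; simpa using hεM
  have hx : x₀ ∈ Metric.closedBall x₀ ((0 : NNReal) : ℝ) := by simp
  obtain ⟨α, hα⟩ := ODE.FunSpace.exists_isFixedPt_next hP hx
  have hyc : Continuous α.compProj := α.continuous_compProj
  have hmem : ∀ σ, α.compProj σ ∈ Metric.closedBall x₀ 1 := by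
    intro σ
    have := α.compProj_mem_closedBall hP.mul_max_le (t := σ)
    simpa using this
  have hIntg : ∀ σ ∈ Icc (0:ℝ) 1, α.compProj σ = x₀ + ∫ s in (0:ℝ)..σ, v s (α.compProj s) := by
    intro σ hσ
    conv_lhs => rw [← hα]
    rw [ODE.FunSpace.compProj_apply, ODE.FunSpace.next_apply, projIcc_of_mem _ hσ]
    rfl
  have hvc : Continuous fun s => v s (α.compProj s) := by
    have h1 := hf.continuous.comp hyc
    have h2 := hg.continuous.comp hyc
    simp only [hv]
    exact ((ha.smul h1).add (hb.smul h2)).const_smul ε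
  refine ⟨α.compProj, hyc, ?_, ?_, ?_⟩
  · rw [hIntg 0 (by simp)]; simp
  · intro σ hσ
    have h1 := ((hvc.integral_hasStrictDerivAt 0 σ).hasDerivAt.const_add x₀).hasDerivWithinAt
      (s := Icc (0:ℝ) 1)
    exact h1.congr (fun s hs => hIntg s hs) (hIntg σ hσ)
  · intro σ hσ
    rw [hIntg σ hσ, add_sub_cancel_left]
    have := intervalIntegral.norm_integral_le_of_norm_le_const (a := (0:ℝ)) (b := σ)
      (f := fun s => v s (α.compProj s)) (C := M * ε)
      (fun s hs => by
        rw [uIoc_of_le hσ.1] at hs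
        exact hbound s ⟨hs.1.le, hs.2.trans hσ.2⟩ _ (hmem s))
    rw [sub_zero, abs_of_nonneg hσ.1] at this
    have hp : 0 ≤ M * ε := by positivity
    nlinarith [hσ.2]

lemma RSol.ftc {n : ℕ} {f g : VF n} {a b : ℝ → ℝ} {x₀ : Euc n} {C ε : ℝ} {y : ℝ → Euc n}
    (hf : ContDiff ℝ (⊤ : ℕ∞) f) (hg : ContDiff ℝ (⊤ : ℕ∞) g)
    (ha : Continuous a) (hb : Continuous b)
    (H : RSol f g a b x₀ C ε y) (h : Euc n → ℝ) (hh : ContDiff ℝ (⊤ : ℕ∞) h)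
    (σ : ℝ) (hσ : σ ∈ Icc (0:ℝ) 1) :
    h (y σ) - h x₀ = ε * ∫ s in (0:ℝ)..σ, (a s * vfD f h (y s) + b s * vfD g h (y s)) := by
  obtain ⟨hc, h0, hd, _⟩ := H
  have c1 := (vfD_smooth hf hh).continuous.comp hc
  have c2 := (vfD_smooth hg hh).continuous.comp hc
  have c3 : Continuous fun s => a s * vfD f h (y s) + b s * vfD g h (y s) :=
    (ha.mul c1).add (hb.mul c2)
  rw [← intervalIntegral.integral_const_mul, ← h0]
  symm
  apply intervalIntegral.integral_eq_sub_of_hasDerivAt_of_le (f := fun s => h (y s)) hσ.1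
    (hh.continuous.comp hc).continuousOn
  · intro s hs
    have hs' : s ∈ Ioo (0:ℝ) 1 := ⟨hs.1, hs.2.trans_le hσ.2⟩
    have h1 := (hd s ⟨hs'.1.le, hs'.2.le⟩).hasDerivAt (Icc_mem_nhds hs'.1 hs'.2)
    have h2 := (smooth_diff hh (y s)).hasFDerivAt.comp_hasDerivAt s h1
    refine h2.congr_deriv ?_
    simp [vfD, mul_add]
  · exact (c3.const_smul ε).intervalIntegrable _ _

lemma conv_lemma {n : ℕ} (f g : VF n) (hf : ContDiff ℝ (⊤ : ℕ∞) f) (hg : ContDiff ℝ (⊤ : ℕ∞) g)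
    (a b : ℝ → ℝ) (ha : Continuous a) (hb : Continuous b) (x₀ : Euc n) (C : ℝ) (hC : 0 < C)
    (m : ℕ) : ∀ h : Sm n, Van (evA x₀) (DD f hf) (DD g hg) m h → ∀ η : ℝ, 0 < η →
      ∃ ε₀ : ℝ, 0 < ε₀ ∧ ∀ ε, 0 < ε → ε ≤ ε₀ → ∀ y, RSol f g a b x₀ C ε y →
        ∀ σ ∈ Icc (0:ℝ) 1,
          |h.1 (y σ) - ε ^ m * GG (evA x₀) (DD f hf) (DD g hg) a b m h σ| ≤ η * ε ^ m := by
  induction m with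
  | zero =>
    intro h _ η hη
    have hcont : Continuous h.1 := (Sm_cd h).continuous
    obtain ⟨δ, hδ, Hδ⟩ := Metric.continuousAt_iff.1 (hcont.continuousAt (x := x₀)) η hη
    refine ⟨δ / (2 * C), by positivity, fun ε hε hε1 y hy σ hσ => ?_⟩
    have h1 := hy.2.2.2 σ hσ
    rw [le_div_iff₀ (by positivity)] at hε1
    have h2 := Hδ (x := y σ) (by rw [dist_eq_norm]; nlinarith)
    rw [Real.dist_eq] at h2
    simpa [GG, evA] using h2.le
  | succ m ih =>
    intro h hV η hη
    obtain ⟨A, hA, HA⟩ := bdd01 a ha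
    obtain ⟨B, hB, HB⟩ := bdd01 b hb
    have hη' : 0 < η / (A + B) := by positivity
    obtain ⟨ε1, hε1, H1⟩ := ih (DD f hf h) (hV.step _ (Or.inl rfl)) _ hη'
    obtain ⟨ε2, hε2, H2⟩ := ih (DD g hg h) (hV.step _ (Or.inr rfl)) _ hη'
    refine ⟨min ε1 ε2, lt_min hε1 hε2, fun ε hε hεm y hy σ hσ => ?_⟩
    have hz : h.1 x₀ = 0 := by simpa [evA] using hV [] (by simp) (by simp)
    have key := hy.ftc hf hg ha hb h.1 h.2 σ hσ
    rw [hz, sub_zero] at key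
    rw [key]
    have c1 := (vfD_smooth hf h.2).continuous.comp hy.1
    have c2 := (vfD_smooth hg h.2).continuous.comp hy.1
    have c3 : Continuous fun s => a s * vfD f h.1 (y s) + b s * vfD g h.1 (y s) :=
      (ha.mul c1).add (hb.mul c2)
    have c4 := GG_cont (evA x₀) (DD f hf) (DD g hg) a b ha hb m (DD f hf h)
    have c5 := GG_cont (evA x₀) (DD f hf) (DD g hg) a b ha hb m (DD g hg h)
    simp only [GG]
    rw [pow_succ', mul_assoc, ← mul_sub, ← intervalIntegral.integral_const_mul,
      ← intervalIntegral.integral_sub (c3.intervalIntegrable _ _)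
      (Continuous.intervalIntegrable (by fun_prop) _ _), abs_mul, abs_of_pos hε]
    have : η * (ε * ε ^ m) = ε * (η * ε ^ m) := by ring
    rw [this]
    apply mul_le_mul_of_nonneg_left _ hε.le
    apply abs_integral_le' _ _ _ hσ
    intro s hs
    have e1 := H1 ε hε (hεm.trans (min_le_left _ _)) y hy s hs
    have e2 := H2 ε hε (hεm.trans (min_le_right _ _)) y hy s hs
    have e3 := HA s hs
    have e4 := HB s hs
    calc _ = |a s * ((DD f hf h).1 (y s) -
            ε ^ m * GG (evA x₀) (DD f hf) (DD g hg) a b m (DD f hf h) s) +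
          b s * ((DD g hg h).1 (y s) -
            ε ^ m * GG (evA x₀) (DD f hf) (DD g hg) a b m (DD g hg h) s)| := by
          congr 1
          simp only [DD, LinearMap.coe_mk, AddHom.coe_mk]
          ring
      _ ≤ |a s| * |(DD f hf h).1 (y s) -
            ε ^ m * GG (evA x₀) (DD f hf) (DD g hg) a b m (DD f hf h) s| +
          |b s| * |(DD g hg h).1 (y s) -
            ε ^ m * GG (evA x₀) (DD f hf) (DD g hg) a b m (DD g hg h) s| := by
          refine (abs_add_le _ _).trans ?_
          rw [abs_mul, abs_mul]
      _ ≤ A * (η / (A + B) * ε ^ m) + B * (η / (A + B) * ε ^ m) := by gcongr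
      _ = _ := by field_simp

end smoothPart
section finalPart

/-- Constant functions. -/
def cstS (n : ℕ) (c : ℝ) : Sm n := ⟨fun _ => c, (contDiff_const : ContDiff ℝ (⊤ : ℕ∞) (fun _ : Euc n => c))⟩

lemma DD_cst {n : ℕ} (X : VF n) (hX : ContDiff ℝ (⊤ : ℕ∞) X) (c : ℝ) : DD X hX (cstS n c) = 0 := by
  ext x
  change fderiv ℝ (fun _ => c) x (X x) = 0
  simp

lemma main_neg {n : ℕ} (f g : VF n) (hf : ContDiff ℝ (⊤ : ℕ∞) f) (hg : ContDiff ℝ (⊤ : ℕ∞) g)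
    (V : Sm n) (x₀ : Euc n) (hx₀ : 0 < V.1 x₀) (l : ℝ) (hl : 0 < l) (a w : ℝ → ℝ)
    (ha : ∀ s, a s = l) (hw : Continuous w) (m : ℕ)
    (hVan : ∀ L : List (Module.End ℝ (Sm n)), (∀ X ∈ L, X = DD f hf ∨ X = DD g hg) → L ≠ [] →
      L.length ≤ m → evA x₀ (L.prod V) = 0)
    (hneg : GG (evA x₀) (DD f hf) (DD g hg) a w (m + 1) V 1 < 0) :
    ∀ ξ : ℝ, 0 < ξ → ∃ ε : ℝ, 0 < ε ∧ ε ≤ ξ ∧ ∃ u : ℝ → ℝ, AdmissibleControl u ∧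
        ∃ x : ℝ → Euc n,
          IsSolOn (fun (y : Euc n) (v : ℝ) => f y + v • g y) u 0 x₀ x ε ∧
          V.1 (x ε) < V.1 x₀ ∧ ∀ s ∈ Icc (0:ℝ) ε, V.1 (x s) ≤ 2 * V.1 x₀ := by
  intro ξ hξ
  obtain rfl : a = fun _ => l := funext ha
  set h : Sm n := V - cstS n (V.1 x₀) with hh
  have hX : ∀ X, X = DD f hf ∨ X = DD g hg → X h = X V := by
    rintro X (rfl | rfl) <;> rw [hh, map_sub, DD_cst, sub_zero]
  have hhx : ∀ x, h.1 x = V.1 x - V.1 x₀ := fun x => rfl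
  have hvan : Van (evA x₀) (DD f hf) (DD g hg) (m + 1) h := by
    intro L hL hlen
    rcases List.eq_nil_or_concat L with rfl | ⟨L', X, rfl⟩
    · change h.1 x₀ = 0
      rw [hhx, sub_self]
    · have h1 := hVan _ hL (by simp) (by omega)
      have hXm : X = DD f hf ∨ X = DD g hg := hL X (by simp)
      rw [List.concat_eq_append, List.prod_append, List.prod_singleton,
        Module.End.mul_apply] at h1 ⊢
      rw [hX X hXm]; exact h1
  have hGG : GG (evA x₀) (DD f hf) (DD g hg) (fun _ => l) w (m + 1) h 1
      = GG (evA x₀) (DD f hf) (DD g hg) (fun _ => l) w (m + 1) V 1 := by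
    simp only [GG]
    rw [hX _ (Or.inl rfl), hX _ (Or.inr rfl)]
  set γ := GG (evA x₀) (DD f hf) (DD g hg) (fun _ => l) w (m + 1) V 1 with hγ
  obtain ⟨C, hC, ε₁, hε₁, Hex⟩ := exists_RSol f g hf hg (fun _ => l) w continuous_const hw x₀
  obtain ⟨ε₀, hε₀, Hconv⟩ := conv_lemma f g hf hg (fun _ => l) w continuous_const hw x₀ C hC (m + 1)
    h hvan (-γ / 2) (by linarith)
  obtain ⟨δ, hδ, Hδ⟩ := Metric.continuousAt_iff.1
    ((Sm_cd V).continuous.continuousAt (x := x₀)) (V.1 x₀) hx₀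
  obtain ⟨ε, hε, he0, he1, he2, he3⟩ : ∃ ε : ℝ, 0 < ε ∧ ε ≤ ε₀ ∧ ε ≤ ε₁ ∧ ε ≤ ξ / l ∧
      ε ≤ δ / (2 * C) := by
    refine ⟨min (min ε₀ ε₁) (min (ξ / l) (δ / (2 * C))), by positivity, ?_, ?_, ?_, ?_⟩
    · exact (min_le_left _ _).trans (min_le_left _ _)
    · exact (min_le_left _ _).trans (min_le_right _ _)
    · exact (min_le_right _ _).trans (min_le_left _ _)
    · exact (min_le_right _ _).trans (min_le_right _ _)
  obtain ⟨y, hy⟩ := Hex ε hε he1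
  have hT : 0 < ε * l := by positivity
  have h01 : ∀ s ∈ Icc (0:ℝ) (ε * l), s / (ε * l) ∈ Icc (0:ℝ) 1 := by
    intro s hs
    exact ⟨div_nonneg hs.1 hT.le, (div_le_one hT).2 hs.2⟩
  refine ⟨ε * l, hT, (le_div_iff₀ hl).1 he2, fun t => w (t / (ε * l)) / l, ⟨?_, ?_⟩,
    fun t => y (t / (ε * l)), ?_, ?_, ?_⟩
  · exact Continuous.measurable (by fun_prop)
  · intro T
    have hc : Continuous fun t => w (t / (ε * l)) / l := by fun_prop
    obtain ⟨K, hK⟩ := isCompact_Icc.exists_bound_of_continuousOn (s := Icc (-T) T) hc.continuousOn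
    refine ⟨K, ?_⟩
    filter_upwards [ae_restrict_mem measurableSet_Icc] with t ht
    exact hK t ht
  · intro t ht
    obtain ⟨hyc, hy0, hyd, _⟩ := hy
    have hxc : Continuous fun t => y (t / (ε * l)) := hyc.comp (by fun_prop)
    have hIntg : Continuous fun τ => f (y (τ / (ε * l))) + (w (τ / (ε * l)) / l) •
        g (y (τ / (ε * l))) := by
      have h1 := hf.continuous.comp hxc
      have h2 := hg.continuous.comp hxc
      have h3 : Continuous fun t => w (t / (ε * l)) / l := by fun_prop
      exact h1.add (h3.smul h2)
    have := intervalIntegral.integral_eq_sub_of_hasDerivAt_of_le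
      (f := fun t => y (t / (ε * l))) (f' := fun τ => f (y (τ / (ε * l))) +
        (w (τ / (ε * l)) / l) • g (y (τ / (ε * l)))) ht.1 hxc.continuousOn (by
        intro s hs
        have hs' : s / (ε * l) ∈ Ioo (0:ℝ) 1 :=
          ⟨div_pos hs.1 hT, (div_lt_one hT).2 (hs.2.trans_le ht.2)⟩
        have h1 := (hyd _ ⟨hs'.1.le, hs'.2.le⟩).hasDerivAt (Icc_mem_nhds hs'.1 hs'.2)
        have h2 := h1.scomp s ((hasDerivAt_id s).div_const (ε * l))
        refine h2.congr_deriv ?_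
        simp only [smul_smul, smul_add, id]
        congr 1
        · rw [show 1 / (ε * l) * (ε * l) = 1 by field_simp, one_smul]
        · congr 1
          field_simp) (hIntg.intervalIntegrable _ _)
    simp only [zero_div, hy0] at this
    change y (t / (ε * l)) = x₀ + ∫ τ in (0:ℝ)..t, (f (y (τ / (ε * l))) +
        (w (τ / (ε * l)) / l) • g (y (τ / (ε * l))))
    rw [this]
    abel
  · have h1 := Hconv ε hε he0 y hy 1 (by simp)
    rw [hGG, hhx] at h1
    have h2 := (abs_le.1 h1).2
    have h3 : 0 < ε ^ (m + 1) := by positivity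
    simp only [div_self hT.ne']
    nlinarith
  · intro s hs
    have h1 := hy.2.2.2 _ (h01 s hs)
    rw [le_div_iff₀ (by positivity)] at he3
    have h2 := Hδ (x := y (s / (ε * l))) (by rw [dist_eq_norm]; nlinarith)
    rw [Real.dist_eq] at h2
    have := (abs_lt.1 h2).2
    simp only
    linarith

lemma vfD_zero_right {n : ℕ} (X : VF n) : vfD X (0 : Euc n → ℝ) = 0 := by
  funext x; simp [vfD]

lemma vfD_smul_left {n : ℕ} (c : ℝ) (X : VF n) (V : Euc n → ℝ) :
    vfD (c • X) V = c • vfD X V := by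
  funext x; simp [vfD]

lemma vfD_smul_right {n : ℕ} (c : ℝ) (X : VF n) (V : Euc n → ℝ) :
    vfD X (c • V) = c • vfD X V := by
  funext x
  simp only [vfD]
  rw [fderiv_const_smul_field]
  rfl

lemma applyVFs_zero {n : ℕ} (l : List (VF n)) (V : Euc n → ℝ) (h : (0 : VF n) ∈ l) :
    applyVFs l V = 0 := by
  induction l with
  | nil => simp at h
  | cons X l ih =>
    rcases List.mem_cons.1 h with h | h
    · subst h; funext x; simp [applyVFs, vfD]
    · simp only [applyVFs]; rw [ih h, vfD_zero_right]

lemma exists_scaled {n : ℕ} (f g : VF n) (V : Euc n → ℝ) (l : List (VF n))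
    (hl : ∀ X ∈ l, X = f ∨ X = g) (h0 : (0 : VF n) ∉ l) :
    ∃ (l' : List (VF n)) (c : ℝ), c ≠ 0 ∧ l'.length = l.length ∧ applyVFs l' V = c • applyVFs l V ∧
      ∀ X ∈ l', X ∈ Lk f g 0 ∧ X ≠ g ∧ X ≠ 0 := by
  induction l with
  | nil => exact ⟨[], 1, one_ne_zero, rfl, by simp, by simp⟩
  | cons X l ih =>
    obtain ⟨l', c, hc, hlen, happ, hmem⟩ := ih (fun Z hZ => hl Z (by simp [hZ]))
      (fun h => h0 (by simp [h]))
    have hX0 : X ≠ 0 := fun h => h0 (by simp [h])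
    have hXm : X ∈ Lk f g 0 := by
      apply Submodule.subset_span
      simpa using hl X (by simp)
    obtain ⟨d, hd, hdg⟩ : ∃ d : ℝ, d ≠ 0 ∧ d • X ≠ g := by
      by_cases h : X = g
      · refine ⟨2, two_ne_zero, fun h2 => hX0 ?_⟩
        rw [← h, two_smul] at h2
        simpa using h2
      · exact ⟨1, one_ne_zero, by simpa using h⟩
    refine ⟨(d • X) :: l', d * c, mul_ne_zero hd hc, by simp [hlen], ?_, ?_⟩
    · simp only [applyVFs]
      rw [happ, vfD_smul_left, vfD_smul_right, smul_smul]
    · intro Z hZ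
      rcases List.mem_cons.1 hZ with h | h
      · subst h
        exact ⟨Submodule.smul_mem _ _ hXm, hdg, smul_ne_zero hd hX0⟩
      · exact hmem Z h

lemma words_zero {n : ℕ} (f g : VF n) (V : Euc n → ℝ) (x : Euc n) (N : ℕ)
    (H : LieCondZero f g V x N) (l : List (VF n)) (hl : ∀ X ∈ l, X = f ∨ X = g) (hne : l ≠ [])
    (hlen : l.length ≤ N) : applyVFs l V x = 0 := by
  by_cases h0 : (0 : VF n) ∈ l
  · rw [applyVFs_zero l V h0]; rfl
  · obtain ⟨l', c, hc, hlen', happ, hmem⟩ := exists_scaled f g V l hl h0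
    have := H l' (List.replicate l'.length 1) (by
      intro h; apply hne; rw [h] at hlen'; exact List.length_eq_zero_iff.1 hlen'.symm) (by simp) (by
      intro p hp
      have h1 := (List.of_mem_zip hp).1
      have h2 : p.2 = 1 := List.eq_of_mem_replicate (List.of_mem_zip hp).2
      obtain ⟨m1, m2, m3⟩ := hmem _ h1
      refine ⟨(le_iSup (fun i => Lk f g i) 0) m1, m2, ?_⟩
      rw [h2]
      exact ⟨m1, m3⟩) (by simp; omega)
    rw [happ] at this
    simpa [hc] using this

lemma words_End {n : ℕ} (f g : VF n) (hf : ContDiff ℝ (⊤ : ℕ∞) f) (hg : ContDiff ℝ (⊤ : ℕ∞) g)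
    (V : Sm n) (L : List (Module.End ℝ (Sm n))) (hL : ∀ X ∈ L, X = DD f hf ∨ X = DD g hg) :
    ∃ l : List (VF n), (∀ X ∈ l, X = f ∨ X = g) ∧ l.length = L.length ∧
      (L.prod V).1 = applyVFs l V.1 := by
  induction L with
  | nil => exact ⟨[], by simp, rfl, rfl⟩
  | cons X L ih =>
    obtain ⟨l, h1, h2, h3⟩ := ih (fun Z hZ => hL Z (by simp [hZ]))
    rcases hL X (by simp) with rfl | rfl
    · refine ⟨f :: l, ?_, by simp [h2], ?_⟩
      · intro Z hZ
        rcases List.mem_cons.1 hZ with h | h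
        · exact Or.inl h
        · exact h1 Z h
      · rw [List.prod_cons, Module.End.mul_apply]
        change vfD f (L.prod V).1 = vfD f (applyVFs l V.1)
        rw [h3]
    · refine ⟨g :: l, ?_, by simp [h2], ?_⟩
      · intro Z hZ
        rcases List.mem_cons.1 hZ with h | h
        · exact Or.inr h
        · exact h1 Z h
      · rw [List.prod_cons, Module.End.mul_apply]
        change vfD g (L.prod V).1 = vfD g (applyVFs l V.1)
        rw [h3]

lemma iterD_eq {n : ℕ} (f : VF n) (hf : ContDiff ℝ (⊤ : ℕ∞) f) (V : Sm n) (k : ℕ) :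
    ((DD f hf ^ k) V).1 = iterD f V.1 k := by
  induction k with
  | zero => rfl
  | succ k ih =>
    rw [pow_succ', Module.End.mul_apply]
    change vfD f ((DD f hf ^ k) V).1 = vfD f (iterD f V.1 k)
    rw [ih]

lemma ev_adE {n : ℕ} {X Y : VF n} (hX : ContDiff ℝ (⊤ : ℕ∞) X)
    (hY : ContDiff ℝ (⊤ : ℕ∞) Y) (k : ℕ) (V : Sm n) (x : Euc n) :
    evA x (((adE (DD Y hY) ^ k) (DD X hX)) V) = (-1) ^ k * vfD (adIter X Y k) V.1 x := by
  have h1 : (adE (DD Y hY) ^ k) (DD X hX)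
      = (-1 : ℝ) ^ k • DD (adIter X Y k) (adIter_smooth hX hY k) := by
    rw [DD_adIter hX hY, smul_smul, ← mul_pow]
    simp
  rw [h1]
  rfl

lemma gcase {n : ℕ} (f g : VF n) (hf : ContDiff ℝ (⊤ : ℕ∞) f) (hg : ContDiff ℝ (⊤ : ℕ∞) g)
    (V : Sm n) (x₀ : Euc n) (h : vfD g V.1 x₀ ≠ 0) :
    ∃ l : ℝ, 0 < l ∧ ∃ a w : ℝ → ℝ, (∀ s, a s = l) ∧ Continuous w ∧
      GG (evA x₀) (DD f hf) (DD g hg) a w (0 + 1) V 1 < 0 := by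
  set q := vfD g V.1 x₀
  obtain ⟨l, hl, H⟩ := GG_neg0 (evA x₀) (DD f hf) (DD g hg) (fun _ => 1) (fun _ => -q)
    (fun s => -q * s) continuous_const continuous_const
    (fun s => by simpa using (hasDerivAt_id s).const_mul (-q)) (by simp) (0 + 1) V (by
      have : (evA x₀) ((DD g hg ^ (0 + 1)) V) = q := by rw [zero_add, pow_one]; rfl
      simp only [Q0]
      rw [this]
      have : 0 < q ^ 2 := by positivity
      simp
      nlinarith)
  exact ⟨l, hl, _, _, fun s => mul_one l, continuous_const, H⟩

lemma fcase {n : ℕ} (f g : VF n) (hf : ContDiff ℝ (⊤ : ℕ∞) f) (hg : ContDiff ℝ (⊤ : ℕ∞) g)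
    (V : Sm n) (x₀ : Euc n) (N : ℕ) (h : iterD f V.1 (N + 1) x₀ < 0) :
    ∃ l : ℝ, 0 < l ∧ ∃ a w : ℝ → ℝ, (∀ s, a s = l) ∧ Continuous w ∧
      GG (evA x₀) (DD f hf) (DD g hg) a w (N + 1) V 1 < 0 := by
  obtain ⟨l, hl, H⟩ := GG_neg0 (evA x₀) (DD g hg) (DD f hf) (fun _ => 0) (fun _ => 1)
    (fun s => s) continuous_const continuous_const
    (fun s => hasDerivAt_id s) rfl (N + 1) V (by
      have : (evA x₀) ((DD f hf ^ (N + 1)) V) = iterD f V.1 (N + 1) x₀ := by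
        rw [← iterD_eq f hf]; rfl
      simp only [Q0]
      rw [this]
      apply mul_neg_of_pos_of_neg _ h
      positivity)
  rw [GG_swap] at H
  exact ⟨1, one_pos, _, _, fun s => rfl, by fun_prop, H⟩

lemma adgcase {n : ℕ} (f g : VF n) (hf : ContDiff ℝ (⊤ : ℕ∞) f) (hg : ContDiff ℝ (⊤ : ℕ∞) g)
    (V : Sm n) (x₀ : Euc n) (N : ℕ) (c : ℝ)
    (h : c ^ N * (-1) ^ N * vfD (adIter f g N) V.1 x₀ < 0) :
    ∃ l : ℝ, 0 < l ∧ ∃ a w : ℝ → ℝ, (∀ s, a s = l) ∧ Continuous w ∧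
      GG (evA x₀) (DD f hf) (DD g hg) a w (N + 1) V 1 < 0 := by
  have hκ : 0 < ∫ s in (0:ℝ)..1, (s - s ^ 2) ^ N / (N.factorial : ℝ) := by
    apply intervalIntegral.intervalIntegral_pos_of_pos_on
    · apply Continuous.intervalIntegrable
      fun_prop
    · intro s hs
      have : 0 < s - s ^ 2 := by nlinarith [hs.1, hs.2]
      positivity
    · norm_num
  obtain ⟨l, hl, H⟩ := GG_neg1 (evA x₀) (DD f hf) (DD g hg) (fun _ => 1)
    (fun s => c * (1 - 2 * s)) (fun s => c * (s - s ^ 2)) continuous_const (by fun_prop)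
    (fun s => by
      have := (((hasDerivAt_id s).sub ((hasDerivAt_id s).pow 2)).const_mul c)
      refine this.congr_deriv ?_
      simp) (by simp) (N + 1) V (by simp [Q0]) 1 (by simp) (by
      simp only [Q1]
      rw [Finset.sum_eq_single (N, 0)]
      · simp only [pow_zero, Module.End.one_apply]
        rw [ev_adE hf hg]
        have : (∫ s in (0:ℝ)..1, 1 * ((c * (s - s ^ 2)) ^ N / (N.factorial : ℝ))) =
            c ^ N * ∫ s in (0:ℝ)..1, (s - s ^ 2) ^ N / (N.factorial : ℝ) := by
          rw [← intervalIntegral.integral_const_mul]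
          congr 1
          funext s
          rw [mul_pow]; ring
        rw [this]
        set κ := ∫ s in (0:ℝ)..1, (s - s ^ 2) ^ N / (N.factorial : ℝ)
        have := mul_neg_of_pos_of_neg hκ h
        simp only [Nat.factorial_zero, Nat.cast_one, div_one, mul_one, one_mul]
        linarith
      · intro p hp hne
        have : p.2 ≠ 0 := by
          intro h0
          rw [Finset.HasAntidiagonal.mem_antidiagonal] at hp
          apply hne
          ext
          · simp; omega
          · simpa using h0
        simp [this]
      · simp)
  exact ⟨l, hl, _, _, fun s => by ring, by fun_prop, H⟩

lemma adfcase {n : ℕ} (f g : VF n) (hf : ContDiff ℝ (⊤ : ℕ∞) f) (hg : ContDiff ℝ (⊤ : ℕ∞) g)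
    (V : Sm n) (x₀ : Euc n) (N : ℕ) (h0 : iterD f V.1 (N + 1) x₀ = 0)
    (h : vfD (adIter g f N) V.1 x₀ ≠ 0) :
    ∃ l : ℝ, 0 < l ∧ ∃ a w : ℝ → ℝ, (∀ s, a s = l) ∧ Continuous w ∧
      GG (evA x₀) (DD f hf) (DD g hg) a w (N + 1) V 1 < 0 := by
  set φ : ℕ × ℕ → ℝ := fun p =>
    evA x₀ (((adE (DD f hf) ^ p.1) (DD g hg)) ((DD f hf ^ p.2) V)) with hφ
  set q : Polynomial ℝ := ∑ p ∈ Finset.HasAntidiagonal.antidiagonal N,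
    Polynomial.monomial p.1 (φ p / ((p.1.factorial : ℝ) * p.2.factorial)) with hq
  have hqe : ∀ s : ℝ, q.eval s = ∑ p ∈ Finset.HasAntidiagonal.antidiagonal N,
      φ p / ((p.1.factorial : ℝ) * p.2.factorial) * s ^ p.1 := by
    intro s
    rw [hq, Polynomial.eval_finset_sum]
    simp
  have hq0 : q ≠ 0 := by
    intro hz
    have hc : q.coeff N = φ (N, 0) / ((N.factorial : ℝ)) := by
      rw [hq, Polynomial.finset_sum_coeff, Finset.sum_eq_single (N, 0)]
      · simp
      · intro p hp hne
        rw [Polynomial.coeff_monomial, if_neg]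
        intro h1
        rw [Finset.HasAntidiagonal.mem_antidiagonal] at hp
        apply hne
        ext
        · exact h1
        · simp; omega
      · simp
    rw [hz, Polynomial.coeff_zero] at hc
    have h1 : φ (N, 0) = (-1) ^ N * vfD (adIter g f N) V.1 x₀ := by
      rw [← ev_adE hg hf]; rfl
    have h2 : (N.factorial : ℝ) ≠ 0 := by positivity
    have h3 : φ (N, 0) ≠ 0 := by
      rw [h1]; exact mul_ne_zero (by simp) h
    exact (div_ne_zero h3 h2) hc.symm
  have hpos : 0 < ∫ s in (0:ℝ)..1, q.eval s * q.eval s := by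
    have hcont : Continuous fun s : ℝ => q.eval s * q.eval s := by fun_prop
    obtain ⟨c, hc, hcq⟩ : ∃ c ∈ Icc (0:ℝ) 1, q.eval c ≠ 0 := by
      by_contra hcon
      push Not at hcon
      apply hq0
      apply Polynomial.eq_zero_of_infinite_isRoot
      exact (Icc_infinite (zero_lt_one' ℝ)).mono fun c hc => hcon c hc
    apply intervalIntegral.integral_pos one_pos hcont.continuousOn
    · intro s _; exact mul_self_nonneg _
    · exact ⟨c, hc, mul_self_pos.2 hcq⟩
  obtain ⟨l, hl, H⟩ := GG_neg1 (evA x₀) (DD g hg) (DD f hf) (fun s => q.eval s)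
    (fun _ => 1) (fun s => s) (by fun_prop) continuous_const
    (fun s => hasDerivAt_id s) rfl (N + 1) V (by
      have : (evA x₀) ((DD f hf ^ (N + 1)) V) = iterD f V.1 (N + 1) x₀ := by
        rw [← iterD_eq f hf]; rfl
      simp only [Q0]
      rw [this, h0, mul_zero]) (-1) (by simp) (by
      have : Q1 (evA x₀) (DD g hg) (DD f hf) (fun s => q.eval s) (fun s => s) (N + 1) V 1
          = ∫ s in (0:ℝ)..1, q.eval s * q.eval s := by
        have e : (fun s : ℝ => q.eval s * q.eval s) = fun s =>
            ∑ p ∈ Finset.HasAntidiagonal.antidiagonal N,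
              (q.eval s * (s ^ p.1 / (p.1.factorial : ℝ))) * (1 / (p.2.factorial : ℝ) * φ p) := by
          funext s
          conv_lhs => rw [hqe s, Finset.mul_sum]
          rw [← hqe s]
          refine Finset.sum_congr rfl fun p _ => ?_
          field_simp
        rw [e, intervalIntegral.integral_finset_sum]
        · simp only [Q1]
          refine Finset.sum_congr rfl fun p _ => ?_
          rw [intervalIntegral.integral_mul_const, one_pow]
          simp only [hφ]
          ring
        · intro p _
          apply Continuous.intervalIntegrable
          fun_prop
      rw [this]
      linarith)
  rw [GG_swap] at H
  exact ⟨1, one_pos, _, _, fun s => rfl, by fun_prop, H⟩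

end finalPart

/-- Under the Lie algebraic condition, the affine system
`ẋ = f(x) + u g(x)` satisfies Assumption 1 with the same `V` and `a(s) := 2s`. -/
theorem stmt3 {n : ℕ} (f g : VF n) (V : Euc n → ℝ)
    (hf : ContDiff ℝ (⊤ : ℕ∞) f) (hg : ContDiff ℝ (⊤ : ℕ∞) g) (hf0 : f 0 = 0)
    (hV : ContDiff ℝ (⊤ : ℕ∞) V) (hV0 : V 0 = 0) (hVpos : ∀ x : Euc n, x ≠ 0 → 0 < V x)
    (hVproper : Tendsto V (cocompact (Euc n)) atTop)
    (hmain : ∀ x : Euc n, x ≠ 0 →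
      vfD g V x ≠ 0 ∨
      (vfD g V x = 0 ∧ vfD f V x < 0) ∨
      (∃ N : ℕ, 1 ≤ N ∧ vfD g V x = 0 ∧
        (∀ i : ℕ, 1 ≤ i → i ≤ N → iterD f V i x = 0) ∧
        LieCondZero f g V x N ∧
        (iterD f V (N + 1) x < 0 ∨
         (Odd N ∧ vfD (adIter f g N) V x ≠ 0) ∨
         (Even N ∧ vfD (adIter f g N) V x < 0) ∨
         (iterD f V (N + 1) x = 0 ∧ vfD (adIter g f N) V x ≠ 0)))) :
    ∀ ξ : ℝ, 0 < ξ → ∀ x₀ : Euc n, x₀ ≠ 0 →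
      ∃ ε : ℝ, 0 < ε ∧ ε ≤ ξ ∧ ∃ u : ℝ → ℝ, AdmissibleControl u ∧
        ∃ x : ℝ → Euc n,
          IsSolOn (fun (y : Euc n) (v : ℝ) => f y + v • g y) u 0 x₀ x ε ∧
          V (x ε) < V x₀ ∧ ∀ s ∈ Icc (0:ℝ) ε, V (x s) ≤ 2 * V x₀ := by 
  intro ξ hξ x₀ hx₀
  let Vs : Sm n := ⟨V, hV⟩
  have hpos : 0 < Vs.1 x₀ := hVpos x₀ hx₀
  rcases hmain x₀ hx₀ with h | ⟨_, h⟩ | ⟨N, hN, _, _, hL, h⟩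
  · obtain ⟨l, hl, a, w, ha, hw, H⟩ := gcase f g hf hg Vs x₀ h
    exact main_neg f g hf hg Vs x₀ hpos l hl a w ha hw 0 (by
      intro L _ hne hlen
      exact absurd (List.length_eq_zero_iff.1 (Nat.le_zero.1 hlen)) hne) H ξ hξ
  · obtain ⟨l, hl, a, w, ha, hw, H⟩ := fcase f g hf hg Vs x₀ 0 h
    exact main_neg f g hf hg Vs x₀ hpos l hl a w ha hw 0 (by
      intro L _ hne hlen
      exact absurd (List.length_eq_zero_iff.1 (Nat.le_zero.1 hlen)) hne) H ξ hξ
  · have key : ∃ l : ℝ, 0 < l ∧ ∃ a w : ℝ → ℝ, (∀ s, a s = l) ∧ Continuous w ∧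
        GG (evA x₀) (DD f hf) (DD g hg) a w (N + 1) Vs 1 < 0 := by
      rcases h with h | ⟨hodd, h⟩ | ⟨heven, h⟩ | ⟨h0, h⟩
      · exact fcase f g hf hg Vs x₀ N h
      · rcases lt_or_gt_of_ne h with h | h
        · apply adgcase f g hf hg Vs x₀ N (-1)
          rw [← mul_pow]
          simpa using h
        · apply adgcase f g hf hg Vs x₀ N 1
          rw [one_pow, hodd.neg_one_pow]
          simpa using h
      · apply adgcase f g hf hg Vs x₀ N 1
        rw [one_pow, heven.neg_one_pow]
        simpa using h
      · exact adfcase f g hf hg Vs x₀ N h0 h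
    obtain ⟨l, hl, a, w, ha, hw, H⟩ := key
    exact main_neg f g hf hg Vs x₀ hpos l hl a w ha hw N (by
      intro L hLm hne hlen
      obtain ⟨l', h1, h2, h3⟩ := words_End f g hf hg Vs L hLm
      change (L.prod Vs).1 x₀ = 0
      rw [h3]
      exact words_zero f g V x₀ N hL l' h1 (by
        intro hnil
        rw [hnil] at h2
        exact hne (List.length_eq_zero_iff.1 h2.symm)) (by omega)) H ξ hξ
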